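/- Let L_1, L_2, L_3 ⊆ ℂ^4 be 2-dimensional linear subspaces (lines in P^3) which are pairwise disjoint, and let m ≥ 1 be an integer. Then the ℂ-vector space of homogeneous polynomials F of degree 2m in ℂ[x_0,x_1,x_2,x_3] with F ∈ I(L_i)^m for i = 1,2,3 has dimension exactly 1. Moreover, for every m ≥ 2 one has binom(2m+3,3) ≤ (1/2)·m·(m+1)·(4m+5), so for m ≥ 2 this linear system 𝓛_{2m}(m,m,m) is special (its dimension 1 exceeds its expected dimension max{binom(2m+3,3) − 3·(1/6)·m·(m+1)·(4m+5), 0} = 0). -/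

import Mathlib

open MvPolynomial

noncomputable section

abbrev C4 : Type := Fin 4 → ℂ
abbrev R3 : Type := MvPolynomial (Fin 4) ℂ

/-- The homogeneous ideal of the line in `P^3` corresponding to a linear subspace
`L ⊆ ℂ^4`: all polynomials vanishing identically on `L`. -/
def lineIdeal (L : Submodule ℂ C4) : Ideal R3 where
  carrier := {F | ∀ v ∈ L, eval v F = 0}
  add_mem' := by
    intro a b ha hb v hv
    simp [ha v hv, hb v hv]
  zero_mem' := by
    intro v hv
    simp
  smul_mem' := by
    intro c F hF v hv
    simp [smul_eq_mul, hF v hv]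

/-!
Let `F` be a form of degree `2m` vanishing to order `m` along pairwise skew lines `A`, `B`, `D`.
Vanishing along `A` and `B` makes `F` bihomogeneous of bidegree `(m, m)` for the decomposition
`A ⊕ B` of the ambient space. The third line is the graph of an isomorphism `φ : A → B`, and
vanishing along it makes `F` invariant under the shears `p + q ↦ p + q + s φ(p)` and
`p + q ↦ p + q + s φ⁻¹(q)`. These generate `SL₂`, which leaves `F` no choice but to be a multiple of
`(x₀ y₁ - x₁ y₀) ^ m`, the `m`-th power of the quadric through the three lines. Both the
bihomogeneity and the shear invariance come from the fact that a polynomial in `t` which is also a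
polynomial in `t⁻¹` is constant.
-/

section LineRestriction

variable {K σ : Type*}

/-- The restriction of a polynomial to the parametrised line `t ↦ v + t • w`. -/
def lineRestriction [CommSemiring K] (v w : σ → K) : MvPolynomial σ K →ₐ[K] Polynomial K :=
  aeval fun i => Polynomial.C (v i) + Polynomial.C (w i) * Polynomial.X

lemma eval_lineRestriction [CommSemiring K] (v w : σ → K) (F : MvPolynomial σ K) (t : K) :
    (lineRestriction v w F).eval t = eval (v + t • w) F := by
  induction F using MvPolynomial.induction_on with
  | C a => simp [lineRestriction]
  | add p q hp hq => simp [hp, hq]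
  | mul_X p i hp => rw [map_mul, Polynomial.eval_mul, hp]; simp [lineRestriction, mul_comm t]

lemma exists_eval_add_smul_eq_pow_mul [Field K] {V : Set (σ → K)} {m : ℕ} {F : MvPolynomial σ K}
    (hF : F ∈ vanishingIdeal K V ^ m) {v : σ → K} (hv : v ∈ V) (w : σ → K) :
    ∃ g : Polynomial K, ∀ t, eval (v + t • w) F = t ^ m * g.eval t := by
  have map_le : (vanishingIdeal K V).map (lineRestriction v w) ≤ Ideal.span {Polynomial.X} := by
    rw [Ideal.map_le_iff_le_comap]
    intro G hG
    rw [Ideal.mem_comap, Ideal.mem_span_singleton, Polynomial.X_dvd_iff,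
      Polynomial.coeff_zero_eq_eval_zero, eval_lineRestriction, zero_smul, add_zero]
    exact hG v hv
  have mem_span : lineRestriction v w F ∈ Ideal.span {Polynomial.X ^ m} := by
    rw [← Ideal.span_singleton_pow]
    refine Ideal.pow_right_mono map_le m ?_
    rw [← Ideal.map_pow]
    exact Ideal.mem_map_of_mem _ hF
  obtain ⟨g, hg⟩ := Ideal.mem_span_singleton.1 mem_span
  exact ⟨g, fun t => by rw [← eval_lineRestriction, hg]; simp⟩

end LineRestriction

lemma eval_eq_eval_of_eval_eq_eval_inv {K : Type*} [Field K] [Infinite K] {g h : Polynomial K}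
    (hgh : ∀ t ≠ 0, g.eval t = h.eval t⁻¹) (s t : K) : g.eval s = g.eval t := by
  -- The factor `X` makes the identity hold at `t = 0` as well.
  have reverse_eq : Polynomial.X * h.reverse = Polynomial.X * (Polynomial.X ^ h.natDegree * g) := by
    refine Polynomial.funext fun t => ?_
    rcases eq_or_ne t 0 with rfl | ht
    · simp
    · let := invertibleOfNonzero (inv_ne_zero ht)
      have reverse_eval := Polynomial.eval₂_reverse_mul_pow (RingHom.id K) t⁻¹ h
      simp only [invOf_eq_inv, inv_inv, Polynomial.eval₂_id, inv_pow] at reverse_eval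
      simp only [Polynomial.eval_mul, Polynomial.eval_X, Polynomial.eval_pow]
      rw [hgh t ht, ← reverse_eval]
      field_simp
  have natDegree_eq : g.natDegree = 0 := by
    rcases eq_or_ne g 0 with rfl | hg
    · exact Polynomial.natDegree_zero
    · have degree_le := Polynomial.reverse_natDegree_le h
      rw [mul_left_cancel₀ Polynomial.X_ne_zero reverse_eq,
        Polynomial.natDegree_X_pow_mul _ hg] at degree_le
      omega
  rw [Polynomial.eq_C_of_natDegree_eq_zero natDegree_eq, Polynomial.eval_C, Polynomial.eval_C]

lemma eval_smul_of_isHomogeneous {R σ : Type*} [CommSemiring R] {F : MvPolynomial σ R} {n : ℕ}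
    (hF : F.IsHomogeneous n) (t : R) (v : σ → R) : eval (t • v) F = t ^ n * eval v F := by
  simp only [eval_eq, Finset.mul_sum]
  refine Finset.sum_congr rfl fun d hd => ?_
  have degree_eq : d.degree = n := by
    rw [Finsupp.degree_eq_weight_one]; exact hF (mem_support_iff.1 hd)
  simp only [Pi.smul_apply, smul_eq_mul, mul_pow, Finset.prod_mul_distrib,
    Finset.prod_pow_eq_pow_sum]
  rw [← degree_eq, Finsupp.degree_apply]
  ring

section Invariance

variable {K σ : Type*} [Field K] [Infinite K] {F : MvPolynomial σ K} {a b : ℕ}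

lemma eval_add_smul_of_mem_vanishingIdeal_pow (hF : F.IsHomogeneous (a + b))
    {A B : Set (σ → K)} (hA : F ∈ vanishingIdeal K A ^ a) (hB : F ∈ vanishingIdeal K B ^ b)
    {p q : σ → K} (hp : p ∈ A) (hq : q ∈ B) (t : K) :
    eval (p + t • q) F = t ^ a * eval (p + q) F := by
  obtain ⟨g, hg⟩ := exists_eval_add_smul_eq_pow_mul hA hp q
  obtain ⟨h, hh⟩ := exists_eval_add_smul_eq_pow_mul hB hq p
  have g_eq_h_inv (t : K) (ht : t ≠ 0) : g.eval t = h.eval t⁻¹ := by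
    have swap : p + t • q = t • (q + t⁻¹ • p) := by
      rw [smul_add, smul_inv_smul₀ ht, add_comm]
    have := hg t
    rw [swap, eval_smul_of_isHomogeneous hF, hh, pow_add, inv_pow, mul_assoc,
      mul_inv_cancel_left₀ (pow_ne_zero b ht)] at this
    exact (mul_left_cancel₀ (pow_ne_zero a ht) this).symm
  have at_one := hg 1
  rw [one_smul, one_pow, one_mul] at at_one
  rw [hg t, at_one, eval_eq_eval_of_eval_eq_eval_inv g_eq_h_inv t 1]

lemma eval_add_smul_of_add_mem (hF : F.IsHomogeneous (a + b)) {A B D : Submodule K (σ → K)}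
    (hA : F ∈ vanishingIdeal K (A : Set (σ → K)) ^ a)
    (hB : F ∈ vanishingIdeal K (B : Set (σ → K)) ^ b)
    (hD : F ∈ vanishingIdeal K (D : Set (σ → K)) ^ a)
    {p q r : σ → K} (hp : p ∈ A) (hq : q ∈ B) (hr : r ∈ B) (hpr : p + r ∈ D) (s : K) :
    eval (p + q + s • r) F = eval (p + q) F := by
  obtain ⟨g, hg⟩ := exists_eval_add_smul_eq_pow_mul hD hpr q
  have shear_eq_g_inv (t : K) (ht : t ≠ 0) :
      (lineRestriction (p + q) r F).eval t = g.eval t⁻¹ := by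
    have scale := eval_add_smul_of_mem_vanishingIdeal_pow hF hA hB hp
      (B.add_mem hq (B.smul_mem t hr)) t⁻¹
    have swap : p + t⁻¹ • (q + t • r) = p + r + t⁻¹ • q := by
      rw [smul_add, inv_smul_smul₀ ht]; abel
    rw [swap, hg t⁻¹, ← add_assoc] at scale
    rw [eval_lineRestriction]
    exact (mul_left_cancel₀ (pow_ne_zero a (inv_ne_zero ht)) scale).symm
  simpa only [eval_lineRestriction, zero_smul, add_zero] using
    eval_eq_eval_of_eval_eq_eval_inv shear_eq_g_inv s 0

-- The factor `x 0 ^ m` on both sides keeps the identity valid, and division-free, where `x 0 = 0`.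
lemma pow_mul_eval_eq_det_pow_mul_eval {m : ℕ} (hF : F.IsHomogeneous (m + m))
    {A B D : Submodule K (σ → K)}
    (hA : F ∈ vanishingIdeal K (A : Set (σ → K)) ^ m)
    (hB : F ∈ vanishingIdeal K (B : Set (σ → K)) ^ m)
    (hD : F ∈ vanishingIdeal K (D : Set (σ → K)) ^ m)
    {e f : Fin 2 → σ → K} (he : ∀ i, e i ∈ A) (hf : ∀ i, f i ∈ B) (hef : ∀ i, e i + f i ∈ D)
    (x y : Fin 2 → K) :
    x 0 ^ m * eval (∑ i, x i • e i + ∑ i, y i • f i) F =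
      x 0 ^ m * ((x 0 * y 1 - x 1 * y 0) ^ m * eval (e 0 + f 1) F) := by
  simp only [Fin.sum_univ_two]
  set p := x 0 • e 0 + x 1 • e 1
  set r := x 0 • f 0 + x 1 • f 1
  have hp : p ∈ A := A.add_mem (A.smul_mem _ (he 0)) (A.smul_mem _ (he 1))
  have hr : r ∈ B := B.add_mem (B.smul_mem _ (hf 0)) (B.smul_mem _ (hf 1))
  have hpr : p + r ∈ D := by
    have : p + r = x 0 • (e 0 + f 0) + x 1 • (e 1 + f 1) := by module
    exact this ▸ D.add_mem (D.smul_mem _ (hef 0)) (D.smul_mem _ (hef 1))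
  set δ := x 0 * y 1 - x 1 * y 0
  have clear_f0 : x 0 ^ m * eval (p + (y 0 • f 0 + y 1 • f 1)) F = eval (p + δ • f 1) F := by
    rw [← eval_add_smul_of_mem_vanishingIdeal_pow hF hA hB hp
        (B.add_mem (B.smul_mem _ (hf 0)) (B.smul_mem _ (hf 1))),
      ← eval_add_smul_of_add_mem hF hA hB hD hp (B.smul_mem δ (hf 1)) hr hpr (y 0)]
    congr 2
    module
  have clear_e1 : eval (p + f 1) F = eval (f 1 + x 0 • e 0) F := by
    rw [← eval_add_smul_of_add_mem hF hB hA hD (hf 1) (A.smul_mem (x 0) (he 0)) (he 1)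
      (add_comm (e 1) (f 1) ▸ hef 1) (x 1)]
    congr 2
    module
  calc x 0 ^ m * eval (p + (y 0 • f 0 + y 1 • f 1)) F
      = eval (p + δ • f 1) F := clear_f0
    _ = δ ^ m * eval (p + f 1) F :=
        eval_add_smul_of_mem_vanishingIdeal_pow hF hA hB hp (hf 1) δ
    _ = δ ^ m * eval (f 1 + x 0 • e 0) F := by rw [clear_e1]
    _ = δ ^ m * (x 0 ^ m * eval (f 1 + e 0) F) := by
        rw [eval_add_smul_of_mem_vanishingIdeal_pow hF hB hA (hf 1) (he 0)]
    _ = x 0 ^ m * (δ ^ m * eval (e 0 + f 1) F) := by rw [add_comm (f 1)]; ring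

end Invariance

section Frames

open Module Sum

variable {K V ι : Type*}

/-- The three subspaces `⟨eᵢ⟩`, `⟨fᵢ⟩` and `⟨eᵢ + fᵢ⟩` attached to a basis `(eᵢ) ∪ (fᵢ)`, where
`eᵢ = b (inl i)` and `fᵢ = b (inr i)`. -/
def frameSpaces [Semiring K] [AddCommMonoid V] [Module K V] (b : Basis (ι ⊕ ι) K V) :
    Fin 3 → Submodule K V :=
  ![Submodule.span K (Set.range fun i => b (inl i)),
    Submodule.span K (Set.range fun i => b (inr i)),
    Submodule.span K (Set.range fun i => b (inl i) + b (inr i))]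

lemma span_range_coe_basis [Semiring K] [AddCommMonoid V] [Module K V] {A : Submodule K V}
    (a : Basis ι K A) : Submodule.span K (Set.range fun i => (a i : V)) = A := by
  rw [← Function.comp_def, ← Submodule.coe_subtype, Set.range_comp, Submodule.span_image, a.span_eq,
    Submodule.map_top, Submodule.range_subtype]

lemma exists_bases_add_eq [Ring K] [AddCommGroup V] [Module K V] {A B D : Submodule K V}
    (hAB : IsCompl A B) (hAD : IsCompl A D) (hBD : IsCompl B D) (d : Basis ι K D) :
    ∃ (a : Basis ι K A) (b : Basis ι K B), ∀ i, (a i + b i : V) = d i := by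
  let toA : D ≃ₗ[K] A :=
    (B.quotientEquivOfIsCompl D hBD).symm.trans (B.quotientEquivOfIsCompl A hAB.symm)
  let toB : D ≃ₗ[K] B :=
    (A.quotientEquivOfIsCompl D hAD).symm.trans (A.quotientEquivOfIsCompl B hAB)
  refine ⟨d.map toA, d.map toB, fun i => ?_⟩
  exact Submodule.projection_add_projection_eq_self hAB (d i : V)

lemma exists_basis_eq_frameSpaces [Ring K] [AddCommGroup V] [Module K V]
    {L : Fin 3 → Submodule K V} (hL : Pairwise fun i j => IsCompl (L i) (L j))
    (d : Basis ι K (L 2)) : ∃ b : Basis (ι ⊕ ι) K V, L = frameSpaces b := by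
  have h01 : IsCompl (L 0) (L 1) := hL (by decide)
  obtain ⟨e, f, hef⟩ := exists_bases_add_eq h01 (hL (by decide)) (hL (by decide)) d
  refine ⟨(e.prod f).map (Submodule.prodEquivOfIsCompl _ _ h01), funext fun i => ?_⟩
  fin_cases i
  · simpa [frameSpaces] using (span_range_coe_basis e).symm
  · simpa [frameSpaces] using (span_range_coe_basis f).symm
  · simpa [frameSpaces, hef] using (span_range_coe_basis d).symm

end Frames

section Quadric

open Module Sum

variable {K σ κ : Type*} [Field K] [Fintype σ] [Fintype κ]

/-- The linear form on `K^σ` giving the `i`-th coordinate in the basis `b`. -/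
def coordForm (b : Basis κ K (σ → K)) (i : κ) : MvPolynomial σ K :=
  open Classical in (LinearMap.toMatrix' b.equivFun.toLinearMap).toMvPolynomial i

lemma eval_coordForm (b : Basis κ K (σ → K)) (i : κ) (v : σ → K) :
    eval v (coordForm b i) = b.repr v i := by
  classical
  simp [coordForm, Matrix.toMvPolynomial_eval_eq_apply, LinearMap.toMatrix'_mulVec]

lemma isHomogeneous_coordForm (b : Basis κ K (σ → K)) (i : κ) :
    (coordForm b i).IsHomogeneous 1 :=
  Matrix.toMvPolynomial_isHomogeneous _ _

lemma coordForm_ne_zero (b : Basis κ K (σ → K)) (i : κ) : coordForm b i ≠ 0 := by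
  intro h
  simpa [h] using eval_coordForm b i (b i)

/-- The quadric `x₀ y₁ - x₁ y₀` containing the three lines `frameSpaces b`, where `xᵢ` and `yᵢ` are
the coordinates belonging to `b (inl i)` and `b (inr i)`. -/
def frameQuadric (b : Basis (Fin 2 ⊕ Fin 2) K (σ → K)) : MvPolynomial σ K :=
  coordForm b (inl 0) * coordForm b (inr 1) - coordForm b (inl 1) * coordForm b (inr 0)

variable (b : Basis (Fin 2 ⊕ Fin 2) K (σ → K))

lemma eval_frameQuadric (v : σ → K) :
    eval v (frameQuadric b) =
      b.repr v (inl 0) * b.repr v (inr 1) - b.repr v (inl 1) * b.repr v (inr 0) := by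
  simp only [frameQuadric, map_sub, map_mul, eval_coordForm]

lemma isHomogeneous_frameQuadric : (frameQuadric b).IsHomogeneous 2 :=
  ((isHomogeneous_coordForm b _).mul (isHomogeneous_coordForm b _)).sub
    ((isHomogeneous_coordForm b _).mul (isHomogeneous_coordForm b _))

lemma frameQuadric_ne_zero : frameQuadric b ≠ 0 := by
  intro h
  simpa [h] using eval_frameQuadric b (b (inl 0) + b (inr 1))

lemma frameQuadric_mem_vanishingIdeal (i : Fin 3) :
    frameQuadric b ∈ vanishingIdeal K (frameSpaces b i : Set (σ → K)) := by
  intro v hv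
  rw [aeval_eq_eval, eval_frameQuadric]
  fin_cases i <;>
    obtain ⟨c, rfl⟩ := (Submodule.mem_span_range_iff_exists_fun K).1 hv <;>
    simp [mul_comm]

end Quadric

section LinearSystem

open Module Sum

variable {K σ ι : Type*} [Field K]

/-- The space `𝓛_d(m)` of forms of degree `d` with multiplicity at least `m i` along each linear
subspace `L i`. -/
def linearSystem (d : ℕ) (m : ι → ℕ) (L : ι → Submodule K (σ → K)) :
    Submodule K (MvPolynomial σ K) :=
  homogeneousSubmodule σ K d ⊓
    ⨅ i, (vanishingIdeal K (L i : Set (σ → K)) ^ m i).restrictScalars K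

lemma mem_linearSystem {d : ℕ} {m : ι → ℕ} {L : ι → Submodule K (σ → K)} {F : MvPolynomial σ K} :
    F ∈ linearSystem d m L ↔
      F.IsHomogeneous d ∧ ∀ i, F ∈ vanishingIdeal K (L i : Set (σ → K)) ^ m i := by
  simp [linearSystem]

lemma frameQuadric_pow_mem_linearSystem [Fintype σ] (b : Basis (Fin 2 ⊕ Fin 2) K (σ → K)) (m : ℕ) :
    frameQuadric b ^ m ∈ linearSystem (2 * m) (fun _ => m) (frameSpaces b) :=
  mem_linearSystem.2 ⟨(isHomogeneous_frameQuadric b).pow m,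
    fun i => Ideal.pow_mem_pow (frameQuadric_mem_vanishingIdeal b i) m⟩

lemma eq_smul_frameQuadric_pow [Infinite K] [Fintype σ] {b : Basis (Fin 2 ⊕ Fin 2) K (σ → K)}
    {m : ℕ} {F : MvPolynomial σ K}
    (hF : F ∈ linearSystem (2 * m) (fun _ => m) (frameSpaces b)) :
    F = eval (b (inl 0) + b (inr 1)) F • frameQuadric b ^ m := by
  obtain ⟨homogeneous, vanishing⟩ := mem_linearSystem.1 hF
  refine mul_left_cancel₀ (pow_ne_zero m (coordForm_ne_zero b (inl 0))) ?_
  refine MvPolynomial.funext fun v => ?_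
  have normal_form := pow_mul_eval_eq_det_pow_mul_eval (two_mul m ▸ homogeneous)
    (vanishing 0) (vanishing 1) (vanishing 2)
    (fun i => Submodule.subset_span (Set.mem_range_self i))
    (fun i => Submodule.subset_span (Set.mem_range_self i))
    (fun i => Submodule.subset_span (Set.mem_range_self i))
    (fun i => b.repr v (inl i)) (fun i => b.repr v (inr i))
  rw [← Fintype.sum_sum_type (fun i => b.repr v i • b i), b.sum_repr v] at normal_form
  simp only [map_mul, map_pow, smul_eval, eval_coordForm, eval_frameQuadric]
  rw [normal_form, mul_comm (eval _ F)]

lemma linearSystem_frameSpaces [Infinite K] [Fintype σ] (b : Basis (Fin 2 ⊕ Fin 2) K (σ → K))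
    (m : ℕ) :
    linearSystem (2 * m) (fun _ => m) (frameSpaces b) =
      Submodule.span K {frameQuadric b ^ m} := by
  refine le_antisymm (fun F hF => ?_)
    ((Submodule.span_singleton_le_iff_mem _ _).2 (frameQuadric_pow_mem_linearSystem b m))
  exact Submodule.mem_span_singleton.2 ⟨_, (eq_smul_frameQuadric_pow hF).symm⟩

end LinearSystem

lemma two_mul_choose_three_le {k : ℕ} (hk : 2 ≤ k) :
    2 * (2 * k + 3).choose 3 ≤ k * (k + 1) * (4 * k + 5) := by
  have choose_eq : 3 * (2 * k + 3).choose 3 = (k + 1) * (2 * k + 1) * (2 * k + 3) := by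
    have := Nat.descFactorial_eq_factorial_mul_choose (2 * k + 3) 3
    simp only [Nat.descFactorial_succ, Nat.descFactorial_zero, Nat.reduceSubDiff,
      Nat.factorial] at this
    linarith
  have quadratic_le : k + 6 ≤ 4 * k ^ 2 := by nlinarith
  nlinarith [Nat.mul_le_mul_left (k + 1) quadratic_le]

theorem stmt_2_general {K σ : Type*} [Field K] [Infinite K] [Fintype σ] (hσ : Fintype.card σ = 4)
    (m : ℕ) (L : Fin 3 → Submodule K (σ → K)) (hdim : ∀ i, Module.finrank K (L i) = 2)
    (hskew : Pairwise fun i j => Disjoint (L i) (L j)) :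
    Module.finrank K (linearSystem (2 * m) (fun _ => m) L) = 1 ∧
      ∀ k : ℕ, 2 ≤ k → 2 * (2 * k + 3).choose 3 ≤ k * (k + 1) * (4 * k + 5) := by
  refine ⟨?_, fun k => two_mul_choose_three_le⟩
  have hcompl : Pairwise fun i j => IsCompl (L i) (L j) := fun i j hij =>
    (Submodule.isCompl_iff_disjoint _ _ (by simp [hσ, hdim])).2 (hskew hij)
  obtain ⟨b, rfl⟩ :=
    exists_basis_eq_frameSpaces hcompl (Module.finBasisOfFinrankEq K (L 2) (hdim 2))
  rw [linearSystem_frameSpaces, finrank_span_singleton (pow_ne_zero m (frameQuadric_ne_zero b))]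

/-- For three pairwise skew lines and any `m ≥ 1`, the system
`𝓛_{2m}(m,m,m)` of degree-`2m` forms with multiplicity `m` along the three lines
has dimension exactly 1; moreover for every `m ≥ 2` one has
`binom(2m+3,3) ≤ m(m+1)(4m+5)/2` (stated multiplied through by 2),
so for `m ≥ 2` the system is special. -/
theorem stmt_2 (m : ℕ) (hm : 1 ≤ m) (L : Fin 3 → Submodule ℂ C4)
    (hdim : ∀ i, Module.finrank ℂ ↥(L i) = 2)
    (hskew : ∀ i j, i ≠ j → L i ⊓ L j = ⊥) :
    (Module.finrank ℂ
      ↥(homogeneousSubmodule (Fin 4) ℂ (2 * m) ⊓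
        ⨅ i, Submodule.restrictScalars ℂ ((lineIdeal (L i)) ^ m)) = 1) ∧
    (∀ k : ℕ, 2 ≤ k → 2 * (2 * k + 3).choose 3 ≤ k * (k + 1) * (4 * k + 5)) := by
  exact stmt_2_general rfl m L hdim fun i j hij => disjoint_iff.2 (hskew i j hij)
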